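/- arXiv:1211.2439 — 2 statements merged into one kernel-verified Lean document; each statement's English description precedes it below -/
import Mathlib

section
/- Let n ≥ 2 be an integer and a > 0. Consider the Cauchy problem f'' = (n−1)(1+(f')²)·coth(f), f(0) = a, f'(0) = 0, where coth(x) = cosh(x)/sinh(x). Then this problem has a unique maximal solution f(a,·), its maximal interval of existence is the open symmetric interval I_a = (−T(a), T(a)), and T(a) = sinh^{n−1}(a) · ∫_a^∞ (sinh^{2n−2}(u) − sinh^{2n−2}(a))^{−1/2} du. -/
/-- `T n a` is the half-height of the rotational minimal `n`-catenoid: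
`T(a) = sinh^{n-1}(a) · ∫_a^∞ (sinh^{2n-2}(u) − sinh^{2n-2}(a))^{-1/2} du`. -/
noncomputable def T (n : ℕ) (a : ℝ) : ℝ :=
  Real.sinh a ^ (n - 1) *
    ∫ u in Set.Ioi a,
      (Real.sinh u ^ (2 * n - 2) - Real.sinh a ^ (2 * n - 2)) ^ (-(1 : ℝ) / 2)

/-- `f` solves the catenary ODE `f'' = (n-1)(1+(f')²) coth(f)` on the set `I`,
with initial conditions `f(0) = a`, `f'(0) = 0`. -/
def IsCatenarySolOn (n : ℕ) (a : ℝ) (I : Set ℝ) (f : ℝ → ℝ) : Prop :=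
  (0 : ℝ) ∈ I ∧ f 0 = a ∧ deriv f 0 = 0 ∧
    ∀ t ∈ I, HasDerivAt f (deriv f t) t ∧
      HasDerivAt (deriv f)
        (((n : ℝ) - 1) * (1 + deriv f t ^ 2) * (Real.cosh (f t) / Real.sinh (f t))) t

/-!
Put `k = n - 1` and parametrize a solution by the rapidity `s = arsinh f'`. The quantity
`sinh (f) ^ (2k) / (1 + f' ^ 2)` is conserved, so `sinh f = sinh a * cosh s ^ (1 / k)`: the height
is a smooth function of `s`, without the singularity that the relation between `f'` and `f` has at
`f = a`. The equation then reads `dt/ds = tanh f / (k * cosh s)`, whose right-hand side is positive,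
even and integrable over `ℝ`. Hence `s ↦ t` is an odd increasing diffeomorphism onto a bounded
interval, its inverse gives a solution, every solution is a restriction of that one, and the
substitution `u = f` identifies the half-length of the interval with `T n a`.
-/

open Real Set Filter Topology MeasureTheory

lemma eq_of_hasDerivWithinAt_zero {E : Type*} [NormedAddCommGroup E] [NormedSpace ℝ E]
    {s : Set ℝ} (hs : s.OrdConnected) {u : ℝ → E} (hu : ∀ x ∈ s, HasDerivWithinAt u 0 s x)
    {x y : ℝ} (hx : x ∈ s) (hy : y ∈ s) : u x = u y := by
  have hbound := hs.convex.norm_image_sub_le_of_norm_hasDerivWithin_le (C := 0) hu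
    (fun _ _ => norm_zero.le) hy hx
  rwa [zero_mul, norm_le_zero_iff, sub_eq_zero] at hbound

lemma range_eq_Ioo_of_strictMono {α β : Type*} [LinearOrder α] [Nonempty α] [NoMaxOrder α]
    [NoMinOrder α] [TopologicalSpace α] [PreconnectedSpace α] [LinearOrder β] [TopologicalSpace β]
    [OrderClosedTopology β] {u : α → β} {b c : β} (hmono : StrictMono u) (hcont : Continuous u)
    (hbot : Tendsto u atBot (𝓝 b)) (htop : Tendsto u atTop (𝓝 c)) : range u = Ioo b c := by
  ext y
  constructor
  · rintro ⟨x, rfl⟩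
    obtain ⟨x₁, hx₁⟩ := exists_lt x
    obtain ⟨x₂, hx₂⟩ := exists_gt x
    exact ⟨(hmono.monotone.le_of_tendsto hbot x₁).trans_lt (hmono hx₁),
      (hmono hx₂).trans_le (hmono.monotone.ge_of_tendsto htop x₂)⟩
  · rintro ⟨hb, hc⟩
    exact mem_range_of_exists_le_of_exists_ge hcont
      (hbot.eventually_le_const hb).exists (htop.eventually_const_le hc).exists

lemma inv_cosh_le_two_mul_exp_neg (s : ℝ) : (cosh s)⁻¹ ≤ 2 * exp (-s) := by
  rw [inv_le_iff_one_le_mul₀ (cosh_pos s), cosh_eq]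
  calc (1 : ℝ) = exp (-s) * exp s := by rw [← exp_add, neg_add_cancel, exp_zero]
    _ ≤ exp (-s) * exp s + exp (-s) * exp (-s) := le_add_of_nonneg_right (by positivity)
    _ = 2 * exp (-s) * ((exp s + exp (-s)) / 2) := by ring

lemma continuous_inv_cosh : Continuous fun s => (cosh s)⁻¹ :=
  continuous_cosh.inv₀ fun s => (cosh_pos s).ne'

lemma integrableOn_inv_cosh_Ioi (c : ℝ) : IntegrableOn (fun s => (cosh s)⁻¹) (Ioi c) := by
  refine Integrable.mono' ((integrableOn_exp_neg_Ioi c).const_mul 2)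
    continuous_inv_cosh.aestronglyMeasurable (Eventually.of_forall fun s => ?_)
  rw [norm_of_nonneg (inv_nonneg.2 (cosh_pos s).le)]
  exact inv_cosh_le_two_mul_exp_neg s

namespace Catenary

/-- The height of the catenary, as a function of the rapidity `s` (that is, `f' = sinh s`), for the
exponent `k = n - 1`. It solves `sinh (height) ^ k = sinh a ^ k * cosh s`. -/
noncomputable def height (k : ℕ) (a s : ℝ) : ℝ := arsinh (sinh a * cosh s ^ (k : ℝ)⁻¹)

/-- The derivative `dt/ds` of the time with respect to the rapidity along a solution. -/
noncomputable def timeDensity (k : ℕ) (a s : ℝ) : ℝ := tanh (height k a s) / cosh s / k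

/-- The time at which a solution reaches the rapidity `s`. -/
noncomputable def time (k : ℕ) (a s : ℝ) : ℝ := ∫ x in (0 : ℝ)..s, timeDensity k a x

/-- The rapidity of the maximal solution at the time `t`. Its values outside the range of
`time k a` are arbitrary. -/
noncomputable def rapidity (k : ℕ) (a : ℝ) : ℝ → ℝ := Function.invFun (time k a)

/-- The maximal solution for the exponent `k = n - 1`. Its values outside the range of `time k a`
are arbitrary. -/
noncomputable def solution (k : ℕ) (a t : ℝ) : ℝ := height k a (rapidity k a t)

variable {k : ℕ} {a : ℝ}

lemma sinh_height (s : ℝ) : sinh (height k a s) = sinh a * cosh s ^ (k : ℝ)⁻¹ := sinh_arsinh _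

lemma sinh_height_pos (ha : 0 < a) (s : ℝ) : 0 < sinh (height k a s) := by
  rw [sinh_height]
  exact mul_pos (sinh_pos_iff.2 ha) (rpow_pos_of_pos (cosh_pos s) _)

lemma sinh_height_pow (hk : k ≠ 0) (s : ℝ) : sinh (height k a s) ^ k = sinh a ^ k * cosh s := by
  rw [sinh_height, mul_pow, rpow_inv_natCast_pow (cosh_pos s).le hk]

@[simp]
lemma height_zero : height k a 0 = a := by simp [height]

@[simp]
lemma height_neg (s : ℝ) : height k a (-s) = height k a s := by simp [height]

lemma eq_height_of_sinh_pow_eq (hk : k ≠ 0) (ha : 0 < a) {x s : ℝ} (hx : 0 < x)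
    (h : sinh x ^ (2 * k) = sinh a ^ (2 * k) * cosh s ^ 2) : x = height k a s := by
  refine sinh_injective ((pow_left_inj₀ (sinh_pos_iff.2 hx).le (sinh_height_pos ha s).le
    (mul_ne_zero two_ne_zero hk)).1 ?_)
  rw [h, pow_mul', pow_mul', sinh_height_pow hk, mul_pow]

lemma strictMonoOn_height (hk : k ≠ 0) (ha : 0 < a) : StrictMonoOn (height k a) (Ici 0) := by
  intro s hs t ht hst
  have hcosh : cosh s ^ (k : ℝ)⁻¹ < cosh t ^ (k : ℝ)⁻¹ :=
    rpow_lt_rpow (cosh_pos s).le (cosh_strictMonoOn hs ht hst) (by positivity)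
  exact arsinh_lt_arsinh.2 (mul_lt_mul_of_pos_left hcosh (sinh_pos_iff.2 ha))

lemma height_image_Ioi (hk : k ≠ 0) (ha : 0 < a) : height k a '' Ioi 0 = Ioi a := by
  refine Subset.antisymm ?_ fun u hu => ?_
  · rintro _ ⟨s, hs, rfl⟩
    simpa using strictMonoOn_height hk ha self_mem_Ici (mem_Ici_of_Ioi hs) hs
  · have hsinh : 0 < sinh a := sinh_pos_iff.2 ha
    have hratio : 1 < (sinh u / sinh a) ^ k :=
      one_lt_pow₀ ((one_lt_div hsinh).2 (sinh_lt_sinh.2 hu)) hk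
    refine ⟨arcosh ((sinh u / sinh a) ^ k), arcosh_pos hratio, ?_⟩
    refine (eq_height_of_sinh_pow_eq hk ha (ha.trans hu) ?_).symm
    rw [cosh_arcosh hratio.le, ← pow_mul', div_pow, mul_div_cancel₀ _ (by positivity)]

lemma hasDerivAt_height (s : ℝ) :
    HasDerivAt (height k a) (sinh s * timeDensity k a s) s := by
  have hcosh := cosh_pos s
  have hderiv := (((hasDerivAt_cosh s).rpow_const (p := (k : ℝ)⁻¹) (.inl hcosh.ne')).const_mul
    (sinh a)).arsinh
  refine hderiv.congr_deriv ?_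
  rw [← cosh_arsinh, ← height, timeDensity, tanh_eq_sinh_div_cosh, sinh_height,
    rpow_sub_one hcosh.ne', smul_eq_mul]
  ring

lemma continuous_height : Continuous (height k a) :=
  continuous_iff_continuousAt.2 fun s => (hasDerivAt_height s).continuousAt

lemma timeDensity_neg (s : ℝ) : timeDensity k a (-s) = timeDensity k a s := by
  simp [timeDensity]

lemma timeDensity_pos (hk : k ≠ 0) (ha : 0 < a) (s : ℝ) : 0 < timeDensity k a s := by
  rw [timeDensity, tanh_eq_sinh_div_cosh]
  have := sinh_height_pos (k := k) ha s
  positivity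

lemma inv_timeDensity (s : ℝ) :
    (timeDensity k a s)⁻¹ = k * cosh s * (cosh (height k a s) / sinh (height k a s)) := by
  rw [timeDensity, tanh_eq_sinh_div_cosh, inv_div, div_div_eq_mul_div, ← inv_div (sinh _)]
  ring

lemma continuous_timeDensity : Continuous (timeDensity k a) := by
  have htanh : Continuous tanh := by
    simp only [funext tanh_eq_sinh_div_cosh]
    exact continuous_sinh.div continuous_cosh fun x => (cosh_pos x).ne'
  exact ((htanh.comp continuous_height).div continuous_cosh fun s => (cosh_pos s).ne').div_const _

lemma integrableOn_timeDensity_Ioi : IntegrableOn (timeDensity k a) (Ioi 0) := by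
  refine Integrable.mono' ((integrableOn_inv_cosh_Ioi 0).div_const (k : ℝ))
    continuous_timeDensity.aestronglyMeasurable (Eventually.of_forall fun s => ?_)
  rw [timeDensity, norm_div, norm_div, norm_of_nonneg (cosh_pos s).le, norm_natCast, ← one_div]
  gcongr
  exact (abs_tanh_lt_one _).le

@[simp]
lemma time_zero : time k a 0 = 0 := intervalIntegral.integral_same

lemma time_neg (s : ℝ) : time k a (-s) = -time k a s := by
  have hsubst := intervalIntegral.integral_comp_neg (a := 0) (b := s) (timeDensity k a)
  simp only [timeDensity_neg, neg_zero] at hsubst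
  rw [time, time, hsubst, intervalIntegral.integral_symm]

lemma hasStrictDerivAt_time (s : ℝ) : HasStrictDerivAt (time k a) (timeDensity k a s) s :=
  continuous_timeDensity.integral_hasStrictDerivAt 0 s

lemma strictMono_time (hk : k ≠ 0) (ha : 0 < a) : StrictMono (time k a) :=
  strictMono_of_hasDerivAt_pos (fun s => (hasStrictDerivAt_time s).hasDerivAt)
    (timeDensity_pos hk ha)

lemma T_succ (k : ℕ) (a : ℝ) : T (k + 1) a =
    sinh a ^ k * ∫ u in Ioi a, (sinh u ^ (2 * k) - sinh a ^ (2 * k)) ^ (-(1 : ℝ) / 2) := rfl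

lemma sinh_height_pow_sub_rpow (hk : k ≠ 0) (ha : 0 < a) {s : ℝ} (hs : 0 ≤ s) :
    (sinh (height k a s) ^ (2 * k) - sinh a ^ (2 * k)) ^ (-(1 : ℝ) / 2) =
      (sinh a ^ k * sinh s)⁻¹ := by
  have hsq : sinh (height k a s) ^ (2 * k) - sinh a ^ (2 * k) = (sinh a ^ k * sinh s) ^ 2 := by
    rw [pow_mul', pow_mul', sinh_height_pow hk, mul_pow, mul_pow, cosh_sq]
    ring
  have hnonneg : 0 ≤ sinh a ^ k * sinh s :=
    mul_nonneg (pow_nonneg (sinh_nonneg_iff.2 ha.le) k) (sinh_nonneg_iff.2 hs)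
  rw [hsq, neg_div, rpow_neg (sq_nonneg _), ← sqrt_eq_rpow, sqrt_sq hnonneg]

lemma T_succ_eq_integral_timeDensity (hk : k ≠ 0) (ha : 0 < a) :
    T (k + 1) a = ∫ s in Ioi 0, timeDensity k a s := by
  rw [T_succ, ← height_image_Ioi hk ha, integral_image_eq_integral_deriv_smul_of_monotoneOn
    measurableSet_Ioi (fun s _ => (hasDerivAt_height s).hasDerivWithinAt)
    ((strictMonoOn_height hk ha).monotoneOn.mono Ioi_subset_Ici_self), ← integral_const_mul]
  refine setIntegral_congr_fun measurableSet_Ioi fun s hs => ?_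
  have hne : sinh a ^ k * sinh s ≠ 0 :=
    mul_ne_zero (pow_ne_zero k (sinh_pos_iff.2 ha).ne') (sinh_pos_iff.2 hs).ne'
  simp only [sinh_height_pow_sub_rpow hk ha (le_of_lt hs), smul_eq_mul]
  calc sinh a ^ k * (sinh s * timeDensity k a s * (sinh a ^ k * sinh s)⁻¹)
      = timeDensity k a s * ((sinh a ^ k * sinh s) * (sinh a ^ k * sinh s)⁻¹) := by ring
    _ = timeDensity k a s := by rw [mul_inv_cancel₀ hne, mul_one]

lemma tendsto_time_atTop (hk : k ≠ 0) (ha : 0 < a) :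
    Tendsto (time k a) atTop (𝓝 (T (k + 1) a)) := by
  rw [T_succ_eq_integral_timeDensity hk ha]
  exact intervalIntegral_tendsto_integral_Ioi 0 integrableOn_timeDensity_Ioi tendsto_id

lemma range_time (hk : k ≠ 0) (ha : 0 < a) :
    range (time k a) = Ioo (-T (k + 1) a) (T (k + 1) a) := by
  refine range_eq_Ioo_of_strictMono (strictMono_time hk ha)
    (continuous_iff_continuousAt.2 fun s => (hasStrictDerivAt_time s).hasDerivAt.continuousAt) ?_
    (tendsto_time_atTop hk ha)
  refine ((tendsto_time_atTop hk ha).comp tendsto_neg_atBot_atTop).neg.congr fun s => ?_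
  rw [Function.comp_apply, time_neg, neg_neg]

lemma rapidity_time (hk : k ≠ 0) (ha : 0 < a) (s : ℝ) : rapidity k a (time k a s) = s :=
  Function.leftInverse_invFun (strictMono_time hk ha).injective s

lemma solution_time (hk : k ≠ 0) (ha : 0 < a) (s : ℝ) :
    solution k a (time k a s) = height k a s := by
  rw [solution, rapidity_time hk ha]

lemma hasDerivAt_rapidity_time (hk : k ≠ 0) (ha : 0 < a) (s : ℝ) :
    HasDerivAt (rapidity k a) (timeDensity k a s)⁻¹ (time k a s) :=
  ((hasStrictDerivAt_time s).to_local_left_inverse (timeDensity_pos hk ha s).ne'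
    (Eventually.of_forall (rapidity_time hk ha))).hasDerivAt

lemma hasDerivAt_solution_time (hk : k ≠ 0) (ha : 0 < a) (s : ℝ) :
    HasDerivAt (solution k a) (sinh s) (time k a s) := by
  refine (HasDerivAt.comp_of_eq _ (hasDerivAt_height s) (hasDerivAt_rapidity_time hk ha s)
    (rapidity_time hk ha s).symm).congr_deriv ?_
  exact mul_inv_cancel_right₀ (timeDensity_pos hk ha s).ne' _

lemma deriv_solution_eventuallyEq (hk : k ≠ 0) (ha : 0 < a) (s : ℝ) :
    deriv (solution k a) =ᶠ[𝓝 (time k a s)] fun t => sinh (rapidity k a t) := by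
  rw [← (hasStrictDerivAt_time s).map_nhds_eq (timeDensity_pos hk ha s).ne']
  refine eventually_map.2 (Eventually.of_forall fun x => ?_)
  simp only [(hasDerivAt_solution_time hk ha x).deriv, rapidity_time hk ha]

lemma hasDerivAt_deriv_solution_time (hk : k ≠ 0) (ha : 0 < a) (s : ℝ) :
    HasDerivAt (deriv (solution k a))
      (k * (1 + sinh s ^ 2) * (cosh (height k a s) / sinh (height k a s))) (time k a s) := by
  refine ((hasDerivAt_rapidity_time hk ha s).sinh.congr_of_eventuallyEq
    (deriv_solution_eventuallyEq hk ha s)).congr_deriv ?_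
  rw [rapidity_time hk ha, inv_timeDensity, ← cosh_sq']
  ring

lemma isCatenarySolOn_solution (hk : k ≠ 0) (ha : 0 < a) :
    IsCatenarySolOn (k + 1) a (range (time k a)) (solution k a) := by
  refine ⟨⟨0, time_zero⟩, ?_, ?_, ?_⟩
  · simpa using solution_time hk ha 0
  · simpa using (hasDerivAt_solution_time hk ha 0).deriv
  · rintro _ ⟨s, rfl⟩
    rw [(hasDerivAt_solution_time hk ha s).deriv, solution_time hk ha, Nat.cast_add_one,
      add_sub_cancel_right]
    exact ⟨hasDerivAt_solution_time hk ha s, hasDerivAt_deriv_solution_time hk ha s⟩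

end Catenary

namespace IsCatenarySolOn

open Catenary

variable {k : ℕ} {a t : ℝ} {J : Set ℝ} {g : ℝ → ℝ}

lemma hasDerivAt_deriv (hg : IsCatenarySolOn (k + 1) a J g) (ht : t ∈ J) :
    HasDerivAt (deriv g) (k * (1 + deriv g t ^ 2) * (cosh (g t) / sinh (g t))) t := by
  obtain ⟨-, -, -, hode⟩ := hg
  simpa using (hode t ht).2

lemma hasDerivAt_sinh_pow_div (hg : IsCatenarySolOn (k + 1) a J g) (ht : t ∈ J) :
    HasDerivAt (fun x => sinh (g x) ^ (2 * k) / (1 + deriv g x ^ 2)) 0 t := by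
  have hpos : 0 < 1 + deriv g t ^ 2 := by positivity
  refine (((hg.2.2.2 t ht).1.sinh.pow (2 * k)).div
    (((hg.hasDerivAt_deriv ht).pow 2).const_add 1) hpos.ne').congr_deriv ?_
  have hcoth : k * sinh (g t) ^ (2 * k) * (cosh (g t) / sinh (g t)) =
      k * sinh (g t) ^ (2 * k - 1) * cosh (g t) := by
    rcases eq_or_ne k 0 with rfl | hk
    · simp
    rcases eq_or_ne (sinh (g t)) 0 with hzero | hne
    · simp [hzero, show 2 * k - 1 ≠ 0 by lia]
    · rw [← pow_sub_one_mul (mul_ne_zero two_ne_zero hk) (sinh (g t))]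
      field_simp
  simp only [Pi.pow_apply]
  rw [div_eq_zero_iff]
  push_cast
  left
  linear_combination -2 * (1 + deriv g t ^ 2) * deriv g t * hcoth

lemma sinh_pow_eq (hg : IsCatenarySolOn (k + 1) a J g) (hJ : J.OrdConnected) (ht : t ∈ J) :
    sinh (g t) ^ (2 * k) = sinh a ^ (2 * k) * (1 + deriv g t ^ 2) := by
  have hconst := eq_of_hasDerivWithinAt_zero hJ
    (fun x hx => (hg.hasDerivAt_sinh_pow_div hx).hasDerivWithinAt) ht hg.1
  obtain ⟨-, hg₀, hg₀', -⟩ := hg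
  have hpos : 0 < 1 + deriv g t ^ 2 := by positivity
  rw [div_eq_iff hpos.ne'] at hconst
  simpa [hg₀, hg₀'] using hconst

-- The conservation law keeps `g` away from `0`, so `g` cannot change sign.
lemma pos (hg : IsCatenarySolOn (k + 1) a J g) (hk : k ≠ 0) (ha : 0 < a) (hJ : J.OrdConnected)
    (ht : t ∈ J) : 0 < g t := by
  have hne : ∀ x ∈ J, g x ≠ 0 := by
    intro x hx hzero
    have hpos : 0 < sinh a ^ (2 * k) * (1 + deriv g x ^ 2) :=
      mul_pos (pow_pos (sinh_pos_iff.2 ha) _) (by positivity)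
    rw [← hg.sinh_pow_eq hJ hx, hzero, sinh_zero, zero_pow (by positivity)] at hpos
    exact hpos.false
  obtain ⟨h₀, hg₀, -, hode⟩ := hg
  by_contra! hle
  have hcont : ContinuousOn g J := fun x hx => (hode x hx).1.continuousAt.continuousWithinAt
  obtain ⟨x, hx, hzero⟩ :=
    hJ.isPreconnected.intermediate_value ht h₀ hcont ⟨hle, hg₀.symm ▸ ha.le⟩
  exact hne x hx hzero

lemma eq_height_arsinh_deriv (hg : IsCatenarySolOn (k + 1) a J g) (hk : k ≠ 0) (ha : 0 < a)
    (hJ : J.OrdConnected) (ht : t ∈ J) : g t = height k a (arsinh (deriv g t)) := by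
  refine eq_height_of_sinh_pow_eq hk ha (hg.pos hk ha hJ ht) ?_
  rw [cosh_sq', sinh_arsinh, hg.sinh_pow_eq hJ ht]

lemma hasDerivAt_arsinh_deriv (hg : IsCatenarySolOn (k + 1) a J g) (hk : k ≠ 0) (ha : 0 < a)
    (hJ : J.OrdConnected) (ht : t ∈ J) : HasDerivAt (fun x => arsinh (deriv g x))
      (timeDensity k a (arsinh (deriv g t)))⁻¹ t := by
  refine (hg.hasDerivAt_deriv ht).arsinh.congr_deriv ?_
  have hsq : 1 + deriv g t ^ 2 = cosh (arsinh (deriv g t)) ^ 2 := by rw [cosh_sq', sinh_arsinh]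
  rw [inv_timeDensity, ← hg.eq_height_arsinh_deriv hk ha hJ ht, ← cosh_arsinh, hsq, smul_eq_mul]
  field_simp

lemma time_arsinh_deriv (hg : IsCatenarySolOn (k + 1) a J g) (hk : k ≠ 0) (ha : 0 < a)
    (hJ : J.OrdConnected) (ht : t ∈ J) : time k a (arsinh (deriv g t)) = t := by
  have hderiv : ∀ x ∈ J,
      HasDerivWithinAt (fun y => time k a (arsinh (deriv g y)) - y) 0 J x := by
    intro x hx
    have hcomp := (hasStrictDerivAt_time (k := k) (a := a) _).hasDerivAt.comp x
      (hg.hasDerivAt_arsinh_deriv hk ha hJ hx)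
    rw [mul_inv_cancel₀ (timeDensity_pos hk ha _).ne'] at hcomp
    exact ((hcomp.sub (hasDerivAt_id x)).congr_deriv (sub_self 1)).hasDerivWithinAt
  have hconst := eq_of_hasDerivWithinAt_zero hJ hderiv ht hg.1
  obtain ⟨-, -, hg₀', -⟩ := hg
  simpa [hg₀', sub_eq_zero] using hconst

lemma solution_eq (hg : IsCatenarySolOn (k + 1) a J g) (hk : k ≠ 0) (ha : 0 < a)
    (hJ : J.OrdConnected) (ht : t ∈ J) : solution k a t = g t := by
  rw [hg.eq_height_arsinh_deriv hk ha hJ ht, ← solution_time hk ha,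
    hg.time_arsinh_deriv hk ha hJ ht]

end IsCatenarySolOn

theorem catenary_maximal_solution_general (n : ℕ) (hn : 2 ≤ n) (a : ℝ) (ha : 0 < a) :
    ∃ f : ℝ → ℝ,
      IsCatenarySolOn n a (Ioo (-(T n a)) (T n a)) f ∧
        ∀ (J : Set ℝ) (g : ℝ → ℝ), J.OrdConnected → IsCatenarySolOn n a J g →
          J ⊆ Ioo (-(T n a)) (T n a) ∧ EqOn f g J := by
  obtain ⟨k, rfl⟩ : ∃ k, n = k + 1 := ⟨n - 1, by lia⟩
  have hk : k ≠ 0 := by lia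
  rw [← Catenary.range_time hk ha]
  refine ⟨Catenary.solution k a, Catenary.isCatenarySolOn_solution hk ha, fun J g hJ hg => ?_⟩
  exact ⟨fun t ht => ⟨arsinh (deriv g t), hg.time_arsinh_deriv hk ha hJ ht⟩,
    fun t ht => hg.solution_eq hk ha hJ ht⟩

/-- The Cauchy problem `f'' = (n-1)(1+(f')²) coth f`, `f(0)=a>0`, `f'(0)=0` has a
unique maximal solution; its maximal interval of existence is the open symmetric
interval `I_a = (−T(a), T(a))`, where
`T(a) = sinh^{n-1}(a) · ∫_a^∞ (sinh^{2n-2}(u) − sinh^{2n-2}(a))^{-1/2} du`. -/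
theorem catenary_maximal_solution (n : ℕ) (hn : 2 ≤ n) (a : ℝ) (ha : 0 < a) :
    ∃ f : ℝ → ℝ,
      IsCatenarySolOn n a (Set.Ioo (-(T n a)) (T n a)) f ∧
        ∀ (J : Set ℝ) (g : ℝ → ℝ), IsOpen J → J.OrdConnected →
          IsCatenarySolOn n a J g →
            J ⊆ Set.Ioo (-(T n a)) (T n a) ∧ Set.EqOn f g J := by
  obtain ⟨f, hf, hmax⟩ := catenary_maximal_solution_general n hn a ha
  exact ⟨f, hf, fun J g _ => hmax J g⟩
end

section
/- Let n ≥ 2 be an integer and let 0 < a < b. Let f(a,·) and f(b,·) be the maximal solutions of f'' = (n−1)(1+(f')²)·coth(f) with f(0) = a, f'(0) = 0 and f(0) = b, f'(0) = 0 respectively, defined on (−T(a), T(a)) and (−T(b), T(b)). Then there exists exactly one t₀ with 0 < t₀ < min(T(a), T(b)) such that f(a, t₀) = f(b, t₀); consequently, by evenness, the generating catenaries t ↦ (tanh(f(a,t)), t) and t ↦ (tanh(f(b,t)), t) intersect at exactly two points, symmetric with respect to t = 0. -/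
/-!
The first integral `sinh^{2n-2}(f) = sinh^{2n-2}(a) (1 + f'²)` of the catenary equation shows that
a solution reaches the height `x` exactly at the times `±τ_a(x)`, where
`τ_a(x) = ∫_a^x ((sinh u / sinh a)^{2n-2} - 1)^{-1/2} du`. So the two catenaries meet exactly at
the heights `x ≥ b` with `τ_a(x) = τ_b(x)`. The integrand increases with `a`, hence `τ_b - τ_a` is
strictly increasing on `[b, ∞)`. It starts at `-τ_a(b) < 0` and tends to `T(b) - T(a)`, which is
positive: substituting `sinh u = sinh a · y` gives
`T(a) = ∫_1^∞ sinh a / √(1 + (sinh a · y)²) · (y^{2n-2} - 1)^{-1/2} dy`, and the integrand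
increases with `sinh a`. Thus `τ_b - τ_a` has exactly one zero.
-/

open MeasureTheory Set Filter Topology
open scoped Pointwise

/-! ### Integrals and graphs -/

lemma setIntegral_lt_setIntegral_of_forall_lt {X : Type*} [MeasurableSpace X] {μ : Measure X}
    {s : Set X} {g h : X → ℝ} (hs : MeasurableSet s) (hμs : μ s ≠ 0) (hg : IntegrableOn g s μ)
    (hh : IntegrableOn h s μ) (hlt : ∀ x ∈ s, g x < h x) : ∫ x in s, g x ∂μ < ∫ x in s, h x ∂μ := by
  have hsub : ∀ x ∈ s, 0 < h x - g x := fun x hx => sub_pos.2 (hlt x hx)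
  rw [← sub_pos, ← integral_sub hh hg, setIntegral_pos_iff_support_of_nonneg_ae
    (ae_restrict_of_forall_mem hs fun x hx => (hsub x hx).le) (hh.sub hg),
    inter_eq_right.2 fun x hx => Function.mem_support.2 (hsub x hx).ne']
  exact hμs.bot_lt

lemma intervalIntegrable_of_integrableOn_Ioi {E : Type*} [NormedAddCommGroup E] {w : ℝ → E}
    {a x y : ℝ} (hw : IntegrableOn w (Ioi a)) (hx : a ≤ x) (hy : a ≤ y) :
    IntervalIntegrable w volume x y :=
  intervalIntegrable_iff.2 <| hw.mono_set fun _ hu => (le_inf hx hy).trans_lt hu.1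

lemma strictMonoOn_primitive_of_pos {w : ℝ → ℝ} {a : ℝ} (hw : IntegrableOn w (Ioi a))
    (hpos : ∀ u ∈ Ioi a, 0 < w u) : StrictMonoOn (fun x => ∫ u in a..x, w u) (Ici a) := by
  intro x hx y hy hxy
  rw [← sub_pos, intervalIntegral.integral_interval_sub_left
    (intervalIntegrable_of_integrableOn_Ioi hw le_rfl hy)
    (intervalIntegrable_of_integrableOn_Ioi hw le_rfl hx)]
  exact intervalIntegral.intervalIntegral_pos_of_pos_on
    (intervalIntegrable_of_integrableOn_Ioi hw hx hy) (fun u hu => hpos u (hx.trans_lt hu.1)) hxy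

lemma setOfPred_eq_and_eq_eq_image {α β : Type*} (s : Set α) (g h : α → β) :
    {p : β × α | p.2 ∈ s ∧ p.1 = g p.2 ∧ p.1 = h p.2} =
      (fun t => (g t, t)) '' {t ∈ s | g t = h t} := by
  ext ⟨y, t⟩
  simp only [mem_ofPred_eq, mem_image, Prod.mk.injEq]
  constructor
  · rintro ⟨ht, rfl, hy⟩
    exact ⟨t, ⟨ht, hy⟩, rfl, rfl⟩
  · rintro ⟨t, ⟨ht, hgh⟩, rfl, rfl⟩
    exact ⟨ht, rfl, hgh⟩

lemma sep_Ioo_neg_abs_eq {α : Type*} [AddCommGroup α] [LinearOrder α] [IsOrderedAddMonoid α]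
    {R t₀ : α} (h0 : 0 ≤ t₀) (hR : t₀ < R) :
    {t ∈ Ioo (-R) R | |t| = t₀} = {t₀, -t₀} := by
  ext t
  rw [mem_sep_iff, mem_Ioo, ← abs_lt, mem_insert_iff, mem_singleton_iff, ← abs_eq h0]
  exact and_iff_right_of_imp fun h => h.trans_lt hR

/-! ### The time kernel -/

/-- The integrand `(y^k - 1)^{-1/2}` of the height-to-time integral, in the variable
`y = sinh u / sinh a`. For `y^k ≤ 1` it has the junk value `0`. -/
noncomputable def timeKernel (k : ℕ) (y : ℝ) : ℝ := (√(y ^ k - 1))⁻¹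

lemma timeKernel_pos {k : ℕ} (hk : k ≠ 0) {y : ℝ} (hy : 1 < y) : 0 < timeKernel k y :=
  inv_pos.2 <| Real.sqrt_pos.2 <| sub_pos.2 <| one_lt_pow₀ hy hk

lemma timeKernel_strictAntiOn {k : ℕ} (hk : k ≠ 0) : StrictAntiOn (timeKernel k) (Ioi 1) := by
  intro x (hx : 1 < x) y _ hxy
  have hx1 : 0 < x ^ k - 1 := sub_pos.2 (one_lt_pow₀ hx hk)
  have hpow : x ^ k < y ^ k := pow_lt_pow_left₀ hxy (by linarith) hk
  exact inv_strictAnti₀ (Real.sqrt_pos.2 hx1) (Real.sqrt_lt_sqrt hx1.le (by linarith))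

lemma timeKernel_le_timeKernel {k l : ℕ} (hk : k ≠ 0) (hkl : k ≤ l) {y : ℝ} (hy : 1 < y) :
    timeKernel l y ≤ timeKernel k y := by
  have hpow : y ^ k ≤ y ^ l := pow_le_pow_right₀ hy.le hkl
  exact inv_anti₀ (inv_pos.1 (timeKernel_pos hk hy)) (Real.sqrt_le_sqrt (by linarith))

lemma measurable_timeKernel (k : ℕ) : Measurable (timeKernel k) := by
  unfold timeKernel
  fun_prop

lemma hasDerivAt_arctan_sqrt_sq_sub_one {y : ℝ} (hy : 1 < y) :
    HasDerivAt (fun y => Real.arctan √(y ^ 2 - 1)) (y⁻¹ * timeKernel 2 y) y := by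
  have hpos : 0 < y ^ 2 - 1 := by nlinarith
  convert (((hasDerivAt_pow 2 y).sub_const 1).sqrt hpos.ne').arctan using 1
  rw [timeKernel, Real.sq_sqrt hpos.le]
  field_simp
  ring

lemma integrableOn_inv_mul_timeKernel_two :
    IntegrableOn (fun y => y⁻¹ * timeKernel 2 y) (Ioi 1) := by
  have hlim : Tendsto (fun y : ℝ => Real.arctan √(y ^ 2 - 1)) atTop (𝓝 (Real.pi / 2)) := by
    refine (tendsto_nhds_of_tendsto_nhdsWithin Real.tendsto_arctan_atTop).comp <|
      Real.tendsto_sqrt_atTop.comp ?_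
    exact tendsto_atTop_add_const_right _ _ (tendsto_pow_atTop two_ne_zero)
  refine integrableOn_Ioi_deriv_of_nonneg ?_ (fun y hy => hasDerivAt_arctan_sqrt_sq_sub_one hy)
    (fun y (hy : 1 < y) => ?_) hlim
  · exact (by fun_prop : Continuous fun y : ℝ => Real.arctan √(y ^ 2 - 1)).continuousWithinAt
  · exact mul_nonneg (by positivity) (timeKernel_pos two_ne_zero hy).le

/-! ### The substitution `sinh u = s * y` -/

lemma hasDerivAt_arsinh_const_mul (s y : ℝ) :
    HasDerivAt (fun y => Real.arsinh (s * y)) (s / √(1 + (s * y) ^ 2)) y := by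
  convert ((hasDerivAt_id' y).const_mul s).arsinh using 1
  rw [smul_eq_mul, mul_one, div_eq_inv_mul]

lemma strictMono_arsinh_const_mul {s : ℝ} (hs : 0 < s) :
    StrictMono fun y => Real.arsinh (s * y) :=
  Real.arsinh_strictMono.comp (strictMono_mul_left_of_pos hs)

lemma image_arsinh_const_mul_Ioi {s : ℝ} (hs : 0 < s) (y₀ : ℝ) :
    (fun y => Real.arsinh (s * y)) '' Ioi y₀ = Ioi (Real.arsinh (s * y₀)) :=
  ((OrderIso.mulLeft₀ s hs).trans Real.sinhOrderIso.symm).image_Ioi y₀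

lemma strictMonoOn_div_sqrt_one_add_mul_sq (y : ℝ) :
    StrictMonoOn (fun s => s / √(1 + (s * y) ^ 2)) (Ici 0) := by
  intro s (hs : 0 ≤ s) t _ hst
  have ht : 0 < t := hs.trans_lt hst
  have hsq : s ^ 2 < t ^ 2 := by gcongr
  have hcross : s * √(1 + (t * y) ^ 2) < t * √(1 + (s * y) ^ 2) := by
    refine lt_of_pow_lt_pow_left₀ 2 (by positivity) ?_
    rw [mul_pow s, mul_pow t √_, Real.sq_sqrt (by positivity), Real.sq_sqrt (by positivity)]
    linarith
  exact (div_lt_div_iff₀ (by positivity) (by positivity)).2 hcross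

lemma div_sqrt_one_add_mul_sq_le_inv {s y : ℝ} (hy : 0 < y) :
    s / √(1 + (s * y) ^ 2) ≤ y⁻¹ := by
  rw [div_le_iff₀ (by positivity), inv_mul_eq_div, le_div_iff₀ hy]
  exact Real.le_sqrt_of_sq_le (by linarith)

lemma integrableOn_div_sqrt_mul_timeKernel {k : ℕ} (hk : 2 ≤ k) {s : ℝ} (hs : 0 ≤ s) :
    IntegrableOn (fun y => s / √(1 + (s * y) ^ 2) * timeKernel k y) (Ioi 1) := by
  have hmeas : Measurable fun y => s / √(1 + (s * y) ^ 2) * timeKernel k y :=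
    (by fun_prop : Measurable fun y => s / √(1 + (s * y) ^ 2)).mul (measurable_timeKernel k)
  refine integrableOn_inv_mul_timeKernel_two.mono' hmeas.aestronglyMeasurable <|
    ae_restrict_of_forall_mem measurableSet_Ioi fun y (hy : 1 < y) => ?_
  have hkernel : 0 < timeKernel k y := timeKernel_pos (by omega) hy
  rw [Real.norm_of_nonneg (by positivity)]
  exact mul_le_mul (div_sqrt_one_add_mul_sq_le_inv (by positivity))
    (timeKernel_le_timeKernel two_ne_zero hk hy) hkernel.le (by positivity)

/-! ### The time density and the blow-up time -/

/-- The time per unit height of the catenary with lowest height `a`, as a function of the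
height `u`. -/
noncomputable def timeDensity (n : ℕ) (a u : ℝ) : ℝ :=
  timeKernel (2 * n - 2) (Real.sinh u / Real.sinh a)

section TimeDensity

variable {n : ℕ} {a b : ℝ}

lemma timeDensity_pos (hn : 2 ≤ n) (ha : 0 < a) {u : ℝ} (hu : a < u) : 0 < timeDensity n a u :=
  timeKernel_pos (by omega) <|
    (one_lt_div (Real.sinh_pos_iff.2 ha)).2 (Real.sinh_lt_sinh.2 hu)

lemma timeDensity_lt_timeDensity (hn : 2 ≤ n) (ha : 0 < a) (hab : a < b) {u : ℝ} (hu : b < u) :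
    timeDensity n a u < timeDensity n b u := by
  have hsinh_a : 0 < Real.sinh a := Real.sinh_pos_iff.2 ha
  have hsinh_ab : Real.sinh a < Real.sinh b := Real.sinh_lt_sinh.2 hab
  have hsinh_bu : Real.sinh b < Real.sinh u := Real.sinh_lt_sinh.2 hu
  exact timeKernel_strictAntiOn (by omega) ((one_lt_div (hsinh_a.trans hsinh_ab)).2 hsinh_bu)
    ((one_lt_div hsinh_a).2 (hsinh_ab.trans hsinh_bu)) (by gcongr; linarith)

lemma T_integrand_eq_timeDensity (ha : 0 < a) {u : ℝ} (hu : a < u) :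
    Real.sinh a ^ (n - 1) *
      (Real.sinh u ^ (2 * n - 2) - Real.sinh a ^ (2 * n - 2)) ^ (-(1 : ℝ) / 2) =
      timeDensity n a u := by
  have hsinh_a : 0 < Real.sinh a := Real.sinh_pos_iff.2 ha
  have hpow : Real.sinh a ^ (2 * n - 2) ≤ Real.sinh u ^ (2 * n - 2) :=
    pow_le_pow_left₀ hsinh_a.le (Real.sinh_lt_sinh.2 hu).le _
  have hsq : Real.sinh a ^ (2 * n - 2) = (Real.sinh a ^ (n - 1)) ^ 2 := by
    rw [← pow_mul, show 2 * n - 2 = (n - 1) * 2 by omega]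
  rw [timeDensity, timeKernel, div_pow, div_sub_one (by positivity),
    Real.sqrt_div (sub_nonneg.2 hpow), inv_div, neg_div, Real.rpow_neg (sub_nonneg.2 hpow),
    ← Real.sqrt_eq_rpow, div_eq_mul_inv, hsq, Real.sqrt_sq (by positivity)]

lemma T_eq_integral_timeDensity (ha : 0 < a) : T n a = ∫ u in Ioi a, timeDensity n a u := by
  rw [T, ← integral_const_mul]
  exact setIntegral_congr_fun measurableSet_Ioi fun u hu => T_integrand_eq_timeDensity ha hu

lemma timeDensity_arsinh_sinh_mul (ha : 0 < a) (y : ℝ) :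
    timeDensity n a (Real.arsinh (Real.sinh a * y)) = timeKernel (2 * n - 2) y := by
  rw [timeDensity, Real.sinh_arsinh, mul_div_cancel_left₀ _ (Real.sinh_pos_iff.2 ha).ne']

lemma image_arsinh_sinh_mul_Ioi_one (ha : 0 < a) :
    (fun y => Real.arsinh (Real.sinh a * y)) '' Ioi 1 = Ioi a := by
  rw [image_arsinh_const_mul_Ioi (Real.sinh_pos_iff.2 ha), mul_one, Real.arsinh_sinh]

lemma integrableOn_timeDensity (hn : 2 ≤ n) (ha : 0 < a) :
    IntegrableOn (timeDensity n a) (Ioi a) := by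
  have hsinh_a : 0 < Real.sinh a := Real.sinh_pos_iff.2 ha
  rw [← image_arsinh_sinh_mul_Ioi_one ha,
    integrableOn_image_iff_integrableOn_deriv_smul_of_monotoneOn measurableSet_Ioi
      (fun y _ => (hasDerivAt_arsinh_const_mul _ y).hasDerivWithinAt)
      ((strictMono_arsinh_const_mul hsinh_a).monotone.monotoneOn _)]
  simp only [timeDensity_arsinh_sinh_mul ha, smul_eq_mul]
  exact integrableOn_div_sqrt_mul_timeKernel (by omega) hsinh_a.le

lemma T_eq_integral_timeKernel (ha : 0 < a) :
    T n a = ∫ y in Ioi 1,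
      Real.sinh a / √(1 + (Real.sinh a * y) ^ 2) * timeKernel (2 * n - 2) y := by
  rw [T_eq_integral_timeDensity ha, ← image_arsinh_sinh_mul_Ioi_one ha,
    integral_image_eq_integral_deriv_smul_of_monotoneOn measurableSet_Ioi
      (fun y _ => (hasDerivAt_arsinh_const_mul _ y).hasDerivWithinAt)
      ((strictMono_arsinh_const_mul (Real.sinh_pos_iff.2 ha)).monotone.monotoneOn _)]
  simp only [timeDensity_arsinh_sinh_mul ha, smul_eq_mul]

lemma T_strictMonoOn (hn : 2 ≤ n) : StrictMonoOn (T n) (Ioi 0) := by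
  intro a (ha : 0 < a) b (hb : 0 < b) hab
  have hsinh_a : 0 ≤ Real.sinh a := Real.sinh_nonneg_iff.2 ha.le
  have hsinh_b : 0 ≤ Real.sinh b := Real.sinh_nonneg_iff.2 hb.le
  rw [T_eq_integral_timeKernel ha, T_eq_integral_timeKernel hb]
  refine setIntegral_lt_setIntegral_of_forall_lt measurableSet_Ioi (by simp)
    (integrableOn_div_sqrt_mul_timeKernel (by omega) hsinh_a)
    (integrableOn_div_sqrt_mul_timeKernel (by omega) hsinh_b) fun y hy => ?_
  exact mul_lt_mul_of_pos_right
    (strictMonoOn_div_sqrt_one_add_mul_sq y hsinh_a hsinh_b (Real.sinh_lt_sinh.2 hab))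
    (timeKernel_pos (by omega) hy)

end TimeDensity

/-! ### The elapsed time -/

/-- The time in which the catenary with lowest height `a` rises from `a` to the height `x`,
meant for `x ≥ a`. It inverts the solution `f(a,·)` on positive times. -/
noncomputable def elapsedTime (n : ℕ) (a x : ℝ) : ℝ := ∫ u in a..x, timeDensity n a u

section ElapsedTime

variable {n : ℕ} {a b : ℝ}

@[simp]
lemma elapsedTime_self (n : ℕ) (a : ℝ) : elapsedTime n a a = 0 :=
  intervalIntegral.integral_same

lemma elapsedTime_strictMonoOn (hn : 2 ≤ n) (ha : 0 < a) :
    StrictMonoOn (elapsedTime n a) (Ici a) :=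
  strictMonoOn_primitive_of_pos (integrableOn_timeDensity hn ha) fun _ hu =>
    timeDensity_pos hn ha hu

lemma elapsedTime_pos (hn : 2 ≤ n) (ha : 0 < a) {x : ℝ} (hx : a < x) : 0 < elapsedTime n a x := by
  simpa using elapsedTime_strictMonoOn hn ha self_mem_Ici hx.le hx

lemma elapsedTime_lt_T (hn : 2 ≤ n) (ha : 0 < a) {x : ℝ} (hx : a ≤ x) :
    elapsedTime n a x < T n a := by
  have hint : IntegrableOn (timeDensity n a) (Ioi x) :=
    (integrableOn_timeDensity hn ha).mono_set (Ioi_subset_Ioi hx)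
  have hrest : 0 < ∫ u in Ioi x, timeDensity n a u := by
    simpa using setIntegral_lt_setIntegral_of_forall_lt measurableSet_Ioi (by simp)
      integrableOn_zero hint fun u hu => timeDensity_pos hn ha (hx.trans_lt hu)
  rw [T_eq_integral_timeDensity ha,
    ← intervalIntegral.integral_interval_add_Ioi (integrableOn_timeDensity hn ha) hint]
  exact lt_add_of_pos_right _ hrest

lemma tendsto_elapsedTime_atTop (hn : 2 ≤ n) (ha : 0 < a) :
    Tendsto (elapsedTime n a) atTop (𝓝 (T n a)) := by
  rw [T_eq_integral_timeDensity ha]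
  exact intervalIntegral_tendsto_integral_Ioi a (integrableOn_timeDensity hn ha) tendsto_id

lemma continuousOn_elapsedTime (hn : 2 ≤ n) (ha : 0 < a) {x : ℝ} (hx : a ≤ x) :
    ContinuousOn (elapsedTime n a) (Icc a x) := by
  simpa only [uIcc_of_le hx] using! intervalIntegral.continuousOn_primitive_interval'
    (intervalIntegrable_of_integrableOn_Ioi (integrableOn_timeDensity hn ha) le_rfl hx)
    left_mem_uIcc

lemma elapsedTime_sub_strictMonoOn (hn : 2 ≤ n) (ha : 0 < a) (hab : a < b) :
    StrictMonoOn (fun x => elapsedTime n b x - elapsedTime n a x) (Ici b) := by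
  have hwa := integrableOn_timeDensity hn ha
  have hwb := integrableOn_timeDensity hn (ha.trans hab)
  have hmono : StrictMonoOn (fun x => ∫ u in b..x, (timeDensity n b u - timeDensity n a u))
      (Ici b) :=
    strictMonoOn_primitive_of_pos (hwb.sub (hwa.mono_set (Ioi_subset_Ioi hab.le))) fun u hu =>
      sub_pos.2 (timeDensity_lt_timeDensity hn ha hab hu)
  refine (hmono.add_const (-elapsedTime n a b)).congr fun x (hx : b ≤ x) => ?_
  have hax : a ≤ x := hab.le.trans hx
  simp only [elapsedTime]
  rw [intervalIntegral.integral_sub (intervalIntegrable_of_integrableOn_Ioi hwb le_rfl hx)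
      (intervalIntegrable_of_integrableOn_Ioi hwa hab.le hax),
    ← intervalIntegral.integral_add_adjacent_intervals
      (intervalIntegrable_of_integrableOn_Ioi hwa le_rfl hab.le)
      (intervalIntegrable_of_integrableOn_Ioi hwa hab.le hax)]
  ring

lemma exists_elapsedTime_eq (hn : 2 ≤ n) (ha : 0 < a) (hab : a < b) :
    ∃ x > b, elapsedTime n a x = elapsedTime n b x := by
  have hb : 0 < b := ha.trans hab
  have hlim := (tendsto_elapsedTime_atTop hn hb).sub (tendsto_elapsedTime_atTop hn ha)
  have hT : 0 < T n b - T n a := sub_pos.2 (T_strictMonoOn hn ha hb hab)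
  obtain ⟨y, hy, hby⟩ := ((hlim.eventually_const_lt hT).and (eventually_gt_atTop b)).exists
  have hneg : elapsedTime n b b - elapsedTime n a b < 0 := by
    simpa using elapsedTime_pos hn ha hab
  have hcont : ContinuousOn (fun x => elapsedTime n b x - elapsedTime n a x) (Icc b y) :=
    (continuousOn_elapsedTime hn hb hby.le).sub <|
      (continuousOn_elapsedTime hn ha (hab.trans hby).le).mono (Icc_subset_Icc_left hab.le)
  obtain ⟨x, hx, hzero⟩ := intermediate_value_Ioo hby.le hcont ⟨hneg, hy⟩
  exact ⟨x, hx.1, (sub_eq_zero.1 hzero).symm⟩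

end ElapsedTime

/-! ### Solutions of the catenary equation -/

lemma natCast_mul_pow_sub_one {K : Type*} [DivisionSemiring K] {k : ℕ} (hk : k ≠ 1) (x : K) :
    (k : K) * x ^ (k - 1) = k * (x ^ k / x) := by
  rcases eq_or_ne k 0 with rfl | hk0
  · simp
  rcases eq_or_ne x 0 with rfl | hx
  · rw [zero_pow (by omega), zero_pow hk0, zero_div]
  · rw [← pow_sub_one_mul hk0, mul_div_cancel_right₀ _ hx]

namespace IsCatenarySolOn

variable {n : ℕ} {a b t : ℝ} {I J : Set ℝ} {f g : ℝ → ℝ}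

lemma comp_neg (hf : IsCatenarySolOn n a I f) : IsCatenarySolOn n a (-I) fun t => f (-t) := by
  obtain ⟨h0, hf0, hf'0, hode⟩ := hf
  have hderiv : deriv (fun t => f (-t)) = fun t => -deriv f (-t) := funext (deriv_comp_neg f)
  refine ⟨by simpa using h0, by simpa using hf0, by simpa [hderiv] using hf'0, fun t ht => ?_⟩
  obtain ⟨hf', hf''⟩ := hode (-t) ht
  rw [hderiv]
  constructor
  · simpa using! hf'.comp t (hasDerivAt_neg t)
  · simpa using! (hf''.comp t (hasDerivAt_neg t)).neg

lemma continuousOn (hf : IsCatenarySolOn n a I f) : ContinuousOn f I := fun t ht =>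
  (hf.2.2.2 t ht).1.continuousAt.continuousWithinAt

lemma hasDerivAt_sinh_pow_div_s10 (hn : n ≠ 0) (hf : IsCatenarySolOn n a I f) (ht : t ∈ I) :
    HasDerivAt (fun s => Real.sinh (f s) ^ (2 * n - 2) / (1 + deriv f s ^ 2)) 0 t := by
  obtain ⟨hf', hf''⟩ := hf.2.2.2 t ht
  have hne : 1 + deriv f t ^ 2 ≠ 0 := by positivity
  have hcast : ((2 * n - 2 : ℕ) : ℝ) = 2 * (n - 1) := by
    rw [Nat.cast_sub (by omega)]
    push_cast
    ring
  refine ((hf'.sinh.pow (2 * n - 2)).div ((hf''.pow 2).const_add 1) hne).congr_deriv ?_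
  refine div_eq_zero_iff.2 (Or.inl ?_)
  -- `f` is not known to be positive yet, but the powers of `sinh (f t)` cancel even if it is zero,
  -- as the equation is then read with `x / 0 = 0`.
  rw [natCast_mul_pow_sub_one (by omega), hcast]
  simp only [Pi.pow_apply]
  ring

lemma sinh_pow_eq_s10 (hn : n ≠ 0) (hI : IsOpen I) (hI' : IsPreconnected I)
    (hf : IsCatenarySolOn n a I f) (ht : t ∈ I) :
    Real.sinh (f t) ^ (2 * n - 2) = Real.sinh a ^ (2 * n - 2) * (1 + deriv f t ^ 2) := by
  have hconst := hI.is_const_of_deriv_eq_zero hI'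
    (fun s hs => (hf.hasDerivAt_sinh_pow_div_s10 hn hs).differentiableAt.differentiableWithinAt)
    (fun s hs => (hf.hasDerivAt_sinh_pow_div_s10 hn hs).deriv) ht hf.1
  rw [div_eq_iff (by positivity)] at hconst
  simpa [hf.2.1, hf.2.2.1] using hconst

lemma le_apply (hn : 2 ≤ n) (ha : 0 < a) (hI : IsOpen I) (hI' : IsPreconnected I)
    (hf : IsCatenarySolOn n a I f) (ht : t ∈ I) : a ≤ f t := by
  by_contra! hlt
  obtain ⟨s, hs, hfs⟩ : max (f t) 0 ∈ f '' I :=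
    hI'.intermediate_value ht hf.1 hf.continuousOn
      ⟨le_max_left _ _, by rw [hf.2.1]; exact max_le hlt.le ha.le⟩
  have hpow_lt : Real.sinh (f s) ^ (2 * n - 2) < Real.sinh a ^ (2 * n - 2) := by
    rw [hfs]
    exact pow_lt_pow_left₀ (Real.sinh_lt_sinh.2 (max_lt hlt ha))
      (Real.sinh_nonneg_iff.2 (le_max_right _ _)) (by omega)
  have hpow_pos : 0 < Real.sinh a ^ (2 * n - 2) := pow_pos (Real.sinh_pos_iff.2 ha) _
  rw [hf.sinh_pow_eq_s10 (by omega) hI hI' hs] at hpow_lt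
  nlinarith [sq_nonneg (deriv f s)]

lemma deriv_strictMonoOn (hn : 2 ≤ n) (ha : 0 < a) (hI : IsOpen I) (hI' : IsPreconnected I)
    (hf : IsCatenarySolOn n a I f) : StrictMonoOn (deriv f) I := by
  refine strictMonoOn_of_deriv_pos hI'.convex
    (fun s hs => (hf.2.2.2 s hs).2.continuousAt.continuousWithinAt) fun s hs => ?_
  rw [hI.interior_eq] at hs
  rw [(hf.2.2.2 s hs).2.deriv]
  have hsinh : 0 < Real.sinh (f s) :=
    Real.sinh_pos_iff.2 (ha.trans_le (hf.le_apply hn ha hI hI' hs))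
  have hn' : (0 : ℝ) < n - 1 := sub_pos.2 (by exact_mod_cast hn)
  have hcosh : 0 < Real.cosh (f s) := Real.cosh_pos _
  exact mul_pos (mul_pos hn' (by positivity)) (div_pos hcosh hsinh)

lemma deriv_pos (hn : 2 ≤ n) (ha : 0 < a) (hI : IsOpen I) (hI' : IsPreconnected I)
    (hf : IsCatenarySolOn n a I f) (ht : t ∈ I) (ht0 : 0 < t) : 0 < deriv f t := by
  simpa [hf.2.2.1] using hf.deriv_strictMonoOn hn ha hI hI' hf.1 ht ht0

lemma timeDensity_mul_deriv (hn : 2 ≤ n) (ha : 0 < a) (hI : IsOpen I) (hI' : IsPreconnected I)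
    (hf : IsCatenarySolOn n a I f) (ht : t ∈ I) (ht0 : 0 < t) :
    timeDensity n a (f t) * deriv f t = 1 := by
  have hderiv : 0 < deriv f t := hf.deriv_pos hn ha hI hI' ht ht0
  have hsinh : Real.sinh a ≠ 0 := (Real.sinh_pos_iff.2 ha).ne'
  rw [timeDensity, timeKernel, div_pow, hf.sinh_pow_eq_s10 (by omega) hI hI' ht,
    mul_div_cancel_left₀ _ (pow_ne_zero _ hsinh), add_sub_cancel_left, Real.sqrt_sq hderiv.le,
    inv_mul_cancel₀ hderiv.ne']

lemma elapsedTime_apply_of_nonneg (hn : 2 ≤ n) (ha : 0 < a) (hI : IsOpen I)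
    (hI' : IsPreconnected I) (hf : IsCatenarySolOn n a I f) (ht : t ∈ I) (ht0 : 0 ≤ t) :
    elapsedTime n a (f t) = t := by
  have hsub : Icc 0 t ⊆ I := hI'.ordConnected.out hf.1 ht
  have hmem : ∀ s ∈ uIoo 0 t, s ∈ I ∧ 0 < s := fun s hs => by
    rw [uIoo_of_le ht0] at hs
    exact ⟨hsub (Ioo_subset_Icc_self hs), hs.1⟩
  calc elapsedTime n a (f t) = ∫ u in f 0..f t, timeDensity n a u := by rw [hf.2.1, elapsedTime]
    _ = ∫ s in 0..t, (timeDensity n a ∘ f) s * deriv f s :=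
      (intervalIntegral.integral_comp_mul_deriv_of_deriv_nonneg
        (hf.continuousOn.mono (by rwa [uIcc_of_le ht0]))
        (fun s hs => (hf.2.2.2 s (hmem s hs).1).1)
        fun s hs => (hf.deriv_pos hn ha hI hI' (hmem s hs).1 (hmem s hs).2).le).symm
    _ = ∫ _ in 0..t, (1 : ℝ) := intervalIntegral.integral_congr_uIoo fun s hs =>
      hf.timeDensity_mul_deriv hn ha hI hI' (hmem s hs).1 (hmem s hs).2
    _ = t := by simp

lemma elapsedTime_apply (hn : 2 ≤ n) (ha : 0 < a) (hI : IsOpen I) (hI' : IsPreconnected I)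
    (hf : IsCatenarySolOn n a I f) (ht : t ∈ I) : elapsedTime n a (f t) = |t| := by
  rcases le_total 0 t with ht0 | ht0
  · rw [abs_of_nonneg ht0, hf.elapsedTime_apply_of_nonneg hn ha hI hI' ht ht0]
  · have hneg := hf.comp_neg.elapsedTime_apply_of_nonneg hn ha hI.neg
      (by simpa using hI'.image (-·) continuous_neg.continuousOn) (t := -t) (by simpa using ht)
      (neg_nonneg.2 ht0)
    rw [abs_of_nonpos ht0, ← hneg, neg_neg]

lemma apply_eq_apply_iff (hn : 2 ≤ n) (ha : 0 < a) (hab : a < b) (hI : IsOpen I)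
    (hI' : IsPreconnected I) (hJ : IsOpen J) (hJ' : IsPreconnected J)
    (hf : IsCatenarySolOn n a I f) (hg : IsCatenarySolOn n b J g) {x : ℝ} (hx : b ≤ x)
    (hxeq : elapsedTime n a x = elapsedTime n b x) (htI : t ∈ I) (htJ : t ∈ J) :
    f t = g t ↔ |t| = elapsedTime n a x := by
  have hb : 0 < b := ha.trans hab
  have hτf : elapsedTime n a (f t) = |t| := hf.elapsedTime_apply hn ha hI hI' htI
  have hτg : elapsedTime n b (g t) = |t| := hg.elapsedTime_apply hn hb hJ hJ' htJ
  have hbg : b ≤ g t := hg.le_apply hn hb hJ hJ' htJ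
  constructor
  · intro hfg
    rw [hfg] at hτf
    have hgx : g t = x := (elapsedTime_sub_strictMonoOn hn ha hab).injOn hbg hx <| by
      simp only [hτf, hτg, hxeq, sub_self]
    rw [← hτf, hgx]
  · intro htx
    have hfx : f t = x := (elapsedTime_strictMonoOn hn ha).injOn (hf.le_apply hn ha hI hI' htI)
      (hab.le.trans hx) (hτf.trans htx)
    have hgx : g t = x := (elapsedTime_strictMonoOn hn hb).injOn hbg hx
      (hτg.trans (htx.trans hxeq))
    rw [hfx, hgx]

end IsCatenarySolOn

/-- For `0 < a < b` there is exactly one `t₀ ∈ (0, min(T(a), T(b)))` with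
`f(a,t₀) = f(b,t₀)`; consequently (by evenness of the solutions) the generating
catenaries `t ↦ (tanh(f(a,t)), t)` and `t ↦ (tanh(f(b,t)), t)` intersect at
exactly two points, symmetric with respect to `t = 0`. -/
theorem catenaries_intersect_twice (n : ℕ) (hn : 2 ≤ n) (a b : ℝ)
    (ha : 0 < a) (hab : a < b) (fa fb : ℝ → ℝ)
    (hfa : IsCatenarySolOn n a (Set.Ioo (-(T n a)) (T n a)) fa)
    (hfb : IsCatenarySolOn n b (Set.Ioo (-(T n b)) (T n b)) fb) :
    (∃! t₀ : ℝ, t₀ ∈ Set.Ioo (0 : ℝ) (min (T n a) (T n b)) ∧ fa t₀ = fb t₀) ∧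
      ∃ t₀ ∈ Set.Ioo (0 : ℝ) (min (T n a) (T n b)),
        {p : ℝ × ℝ | p.2 ∈ Set.Ioo (-(min (T n a) (T n b))) (min (T n a) (T n b)) ∧
            p.1 = Real.tanh (fa p.2) ∧ p.1 = Real.tanh (fb p.2)} =
          {(Real.tanh (fa t₀), t₀), (Real.tanh (fa (-t₀)), -t₀)} := by
  obtain ⟨x, hbx, hx⟩ := exists_elapsedTime_eq hn ha hab
  have hTab : T n a < T n b := T_strictMonoOn hn ha (ha.trans hab) hab
  have hsub : Ioo (-T n a) (T n a) ⊆ Ioo (-T n b) (T n b) :=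
    Ioo_subset_Ioo (neg_le_neg hTab.le) hTab.le
  have hmeet : ∀ t ∈ Ioo (-T n a) (T n a), (fa t = fb t ↔ |t| = elapsedTime n a x) := fun t ht =>
    hfa.apply_eq_apply_iff hn ha hab isOpen_Ioo isPreconnected_Ioo isOpen_Ioo isPreconnected_Ioo
      hfb hbx.le hx ht (hsub ht)
  have hpos : 0 < elapsedTime n a x := elapsedTime_pos hn ha (hab.trans hbx)
  have hlt : elapsedTime n a x < T n a := elapsedTime_lt_T hn ha (hab.trans hbx).le
  have hnonneg : ∀ t ∈ Ioo 0 (T n a), (fa t = fb t ↔ t = elapsedTime n a x) := fun t ht => by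
    rw [hmeet t ⟨by linarith [ht.1, ht.2], ht.2⟩, abs_of_pos ht.1]
  rw [min_eq_left hTab.le]
  refine ⟨⟨_, ⟨⟨hpos, hlt⟩, (hnonneg _ ⟨hpos, hlt⟩).2 rfl⟩, fun t ht => (hnonneg t ht.1).1 ht.2⟩,
    _, ⟨hpos, hlt⟩, ?_⟩
  have htimes : {t ∈ Ioo (-T n a) (T n a) | Real.tanh (fa t) = Real.tanh (fb t)} =
      {t ∈ Ioo (-T n a) (T n a) | |t| = elapsedTime n a x} :=
    sep_ext_iff.2 fun t ht => Real.tanh_injective.eq_iff.trans (hmeet t ht)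
  rw [setOfPred_eq_and_eq_eq_image _ (fun t => Real.tanh (fa t)) fun t => Real.tanh (fb t), htimes,
    sep_Ioo_neg_abs_eq hpos.le hlt, image_pair]
end
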